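/- The infinite product ∏_{k=2}^{∞} (2^{k−1}+1)^{e^{−k}/(k−1)!} converges, and 2^{e^{−1} − e^{1/e − 2}} · ∏_{k=2}^{∞} (2^{k−1}+1)^{e^{−k}/(k−1)!} > 1.37135. -/

import Mathlib

/-!
All factors are at least `1`, so the product is bounded below by any of its partial products, and
everything can be done after taking logarithms. Since `log (2^(k-1) + 1) ≤ 2^(k-1)`, the series
of logarithms is dominated by `∑ 2^(k-1) / (k-1)!`, which gives convergence
(`summable_log_starFactor`). The partial product up to `k = 7` is already enough: its logarithm,
together with the prefactor, exceeds `log 1.37135` by about `4.4e-6`. This is `star_numeric`, an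
interval computation from rational bounds on `e⁻¹`, `exp e⁻¹` and the logarithms involved.
-/

/-- The factor `(2^{k-1}+1)^{e^{-k}/(k-1)!}` for `k ≥ 2`, and `1` for `k < 2`. -/
noncomputable def starFactor (k : ℕ) : ℝ :=
  if k < 2 then 1
  else ((2 : ℝ) ^ (k - 1) + 1) ^ (Real.exp (-(k : ℝ)) / (Nat.factorial (k - 1)))

theorem log_starFactor_succ (n : ℕ) (hn : 1 ≤ n) :
    Real.log (starFactor (n + 1)) =
      Real.log ((2 : ℝ) ^ n + 1) * (Real.exp (-1) ^ (n + 1) / (n.factorial : ℝ)) := by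
  have h : ¬ n + 1 < 2 := by omega
  rw [starFactor, if_neg h, Real.log_rpow (by positivity), ← Real.exp_nat_mul, mul_comm]
  simp

theorem starFactor_pos (k : ℕ) : 0 < starFactor k := by
  unfold starFactor
  split_ifs
  · exact one_pos
  · positivity

theorem log_starFactor_nonneg (k : ℕ) : 0 ≤ Real.log (starFactor k) := by
  apply Real.log_nonneg
  unfold starFactor
  split_ifs
  · exact le_rfl
  · exact Real.one_le_rpow (le_add_of_nonneg_left (by positivity)) (by positivity)

theorem summable_log_starFactor : Summable fun k ↦ Real.log (starFactor k) := by
  rw [← summable_nat_add_iff 1]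
  refine Summable.of_nonneg_of_le (fun n ↦ log_starFactor_nonneg _) (fun n ↦ ?_)
    (Real.summable_pow_div_factorial 2)
  rcases Nat.eq_zero_or_pos n with rfl | hn
  · simp [starFactor]
  · rw [log_starFactor_succ n hn, div_eq_mul_inv, div_eq_mul_inv]
    have h1 : Real.log ((2 : ℝ) ^ n + 1) ≤ 2 ^ n := by
      have := Real.log_le_sub_one_of_pos (show (0 : ℝ) < 2 ^ n + 1 by positivity)
      linarith
    have h2 : Real.exp (-1) ^ (n + 1) ≤ 1 :=
      pow_le_one₀ (Real.exp_pos _).le (Real.exp_le_one_iff.2 (by norm_num))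
    gcongr
    exact mul_le_of_le_one_left (by positivity) h2

/-- Truncating the series `log ((1 + x) / (1 - x)) = 2 ∑ x^(2i+1) / (2i+1)` after three terms. -/
theorem log_lower {x y : ℝ} (h0 : 0 ≤ x) (h1 : x < 1) (hy : (1 + x) / (1 - x) = y) :
    2 * (x + x ^ 3 / 3 + x ^ 5 / 5) ≤ Real.log y := by
  have := Real.sum_range_le_log_div h0 h1 3
  rw [hy] at this
  norm_num [Finset.sum_range_succ] at this
  linarith

theorem log_17_gt : (2.83321333 : ℝ) < Real.log 17 := by
  have h : Real.log 17 = 4 * Real.log 2 + Real.log (17 / 16) := by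
    rw [show (17 : ℝ) = 2 ^ 4 * (17 / 16) by norm_num, Real.log_mul (by norm_num) (by norm_num),
      Real.log_pow]
    norm_num
  have := log_lower (x := 1 / 33) (y := 17 / 16) (by norm_num) (by norm_num) (by norm_num)
  norm_num at this
  linarith [Real.log_two_gt_d9]

theorem log_33_gt : (3.49650755 : ℝ) < Real.log 33 := by
  have h : Real.log 33 = 5 * Real.log 2 + Real.log (33 / 32) := by
    rw [show (33 : ℝ) = 2 ^ 5 * (33 / 32) by norm_num, Real.log_mul (by norm_num) (by norm_num),
      Real.log_pow]
    norm_num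
  have := log_lower (x := 1 / 65) (y := 33 / 32) (by norm_num) (by norm_num) (by norm_num)
  norm_num at this
  linarith [Real.log_two_gt_d9]

theorem log_65_gt : (4.17438726 : ℝ) < Real.log 65 := by
  have h : Real.log 65 = 6 * Real.log 2 + Real.log (65 / 64) := by
    rw [show (65 : ℝ) = 2 ^ 6 * (65 / 64) by norm_num, Real.log_mul (by norm_num) (by norm_num),
      Real.log_pow]
    norm_num
  have := log_lower (x := 1 / 129) (y := 65 / 64) (by norm_num) (by norm_num) (by norm_num)
  norm_num at this
  linarith [Real.log_two_gt_d9]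

theorem log_target_lt : Real.log 1.37135 < 0.3157957 := by
  -- `x = 37135 / 237135` solves `(1 + x) / (1 - x) = 1.37135`.
  have := Real.log_div_le_sum_range_add (x := 37135 / 237135) (by norm_num) (by norm_num) 5
  rw [show (1 + 37135 / 237135 : ℝ) / (1 - 37135 / 237135) = 1.37135 by norm_num] at this
  norm_num [Finset.sum_range_succ] at this
  norm_num
  linarith

theorem exp_exp_neg_one_lt : Real.exp (Real.exp (-1)) < 1.4446679 := by
  have h := Real.exp_bound' (x := 0.3678794412) (by norm_num) (by norm_num) (n := 9) (by norm_num)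
  refine (Real.exp_lt_exp.2 Real.exp_neg_one_lt_d9).trans_le (h.trans ?_)
  norm_num [Finset.sum_range_succ, Nat.factorial]

theorem star_numeric :
    Real.log 1.37135 < Real.log 2 * (Real.exp (-1) - Real.exp ((Real.exp 1)⁻¹ - 2)) +
      (Real.log 3 * Real.exp (-1) ^ 2 + Real.log 5 * (Real.exp (-1) ^ 3 / 2) +
       Real.log 9 * (Real.exp (-1) ^ 4 / 6) + Real.log 17 * (Real.exp (-1) ^ 5 / 24) +
       Real.log 33 * (Real.exp (-1) ^ 6 / 120) + Real.log 65 * (Real.exp (-1) ^ 7 / 720)) := by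
  have hexp : Real.exp ((Real.exp 1)⁻¹ - 2) = Real.exp (-1) ^ 2 * Real.exp (Real.exp (-1)) := by
    rw [← Real.exp_neg, ← Real.exp_nat_mul, ← Real.exp_add]
    congr 1
    push_cast
    ring
  have h9 : Real.log 9 = 2 * Real.log 3 := by
    rw [show (9 : ℝ) = 3 ^ 2 by norm_num, Real.log_pow]
    norm_num
  have hE := exp_exp_neg_one_lt
  rw [hexp, h9]
  have hq := Real.exp_neg_one_gt_d9
  have hq' := Real.exp_neg_one_lt_d9
  have hE0 := (Real.exp_pos (Real.exp (-1))).le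
  generalize Real.exp (Real.exp (-1)) = E at *
  generalize Real.exp (-1) = q at *
  have hq0 : (0 : ℝ) < q := lt_trans (by norm_num) hq
  have hsub : (0.36787944116 - 0.3678794412 ^ 2 * 1.4446679 : ℝ) ≤ q - q ^ 2 * E := by
    have : q ^ 2 * E ≤ 0.3678794412 ^ 2 * 1.4446679 := by gcongr
    linarith
  calc Real.log 1.37135 < 0.3157957 := log_target_lt
    _ ≤ 0.6931471803 * (0.36787944116 - 0.3678794412 ^ 2 * 1.4446679) +
      (1.0986122885 * 0.36787944116 ^ 2 + 1.6094379123 * (0.36787944116 ^ 3 / 2) +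
       2 * 1.0986122885 * (0.36787944116 ^ 4 / 6) + 2.83321333 * (0.36787944116 ^ 5 / 24) +
       3.49650755 * (0.36787944116 ^ 6 / 120) + 4.17438726 * (0.36787944116 ^ 7 / 720)) := by
      norm_num
    _ ≤ _ := by
      have h2 := Real.log_two_gt_d9.le
      have h3 := Real.log_three_gt_d9.le
      have h5 := Real.log_five_gt_d9.le
      have h17 := log_17_gt.le
      have h33 := log_33_gt.le
      have h65 := log_65_gt.le
      have h0 := mul_le_mul h2 hsub (by norm_num) (le_trans (by norm_num) h2)
      refine add_le_add h0 ?_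
      gcongr

/-- The infinite product `∏_{k≥2} (2^{k-1}+1)^{e^{-k}/(k-1)!}` converges, and
`2^{e^{-1} - e^{1/e - 2}} ∏_{k≥2} (2^{k-1}+1)^{e^{-k}/(k-1)!} > 1.37135`. -/
theorem star_product_lower_bound :
    Multipliable starFactor ∧
    (1.37135 : ℝ) <
      (2 : ℝ) ^ (Real.exp (-1) - Real.exp ((Real.exp 1)⁻¹ - 2)) * ∏' k : ℕ, starFactor k := by
  refine ⟨Real.multipliable_of_summable_log starFactor_pos summable_log_starFactor, ?_⟩
  rw [← Real.rexp_tsum_eq_tprod starFactor_pos summable_log_starFactor,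
    Real.rpow_def_of_pos two_pos, ← Real.exp_add, ← Real.log_lt_iff_lt_exp (by norm_num)]
  refine star_numeric.trans_le (add_le_add le_rfl ?_)
  have h := summable_log_starFactor.sum_le_tsum (Finset.range 8)
    (fun k _ ↦ log_starFactor_nonneg k)
  refine le_trans (le_of_eq ?_) h
  have h0 : Real.log (starFactor 0) = 0 := by simp [starFactor]
  have h1 : Real.log (starFactor 1) = 0 := by simp [starFactor]
  rw [Finset.sum_range_succ, Finset.sum_range_succ, Finset.sum_range_succ, Finset.sum_range_succ,
    Finset.sum_range_succ, Finset.sum_range_succ, Finset.sum_range_succ, Finset.sum_range_succ,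
    Finset.sum_range_zero, h0, h1, log_starFactor_succ 1 (by norm_num),
    log_starFactor_succ 2 (by norm_num), log_starFactor_succ 3 (by norm_num),
    log_starFactor_succ 4 (by norm_num), log_starFactor_succ 5 (by norm_num),
    log_starFactor_succ 6 (by norm_num)]
  norm_num [Nat.factorial]
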